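/- LP-rounding gives a factor-2 guarantee for one-sided guarding: let f : ℝ → ℝ be a terrain, G_L, G_R ⊆ ℝ finite sets of left and right guards with nonnegative weights w_L : G_L → ℝ and w_R : G_R → ℝ, and N ⊆ ℝ a finite set of points. Suppose x : G_L → ℝ and y : G_R → ℝ are nonnegative and for every p ∈ N, Σ_{g ∈ G_L, g < p, g sees p} x(g) + Σ_{g ∈ G_R, p < g, g sees p} y(g) ≥ 1. Then there exist A_L ⊆ G_L and A_R ⊆ G_R such that every p ∈ N is seen from the left by some guard in A_L or from the right by some guard in A_R, and Σ_{g ∈ A_L} w_L(g) + Σ_{g ∈ A_R} w_R(g) ≤ 2·(Σ_{g ∈ G_L} w_L(g)·x(g) + Σ_{g ∈ G_R} w_R(g)·y(g)). -/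

import Mathlib

/-!
The geometric input is that sight lines cannot merely cross: if `a < b < c < d`, `a` sees `c` and
`b` sees `d`, then `a` sees `d`. Hence of two left guards seeing `p`, the one further to the left
sees every point right of `p` that the other one sees, so the left guards seeing `p` have nested
views of the points from `p` on. Right guards mirror this.

Covering by guards with nested views has integrality gap `1`, by a local-ratio induction that
removes the leftmost point `p`. Let `ε` be the least weight of a guard seeing `p`, lower the weight
of every guard seeing `p` by `ε`, and cover the other points. Adding a guard of reduced weight `0`
that sees `p` costs nothing. Of the chosen guards seeing `p` only the one with the largest view is
kept, so the true weight exceeds the reduced weight by exactly `ε`, while the LP value drops by at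
least `ε`.

Finally, every point receives at least half of its LP value from the left guards or at least half
from the right guards, so the doubled LP solution splits into two one-sided fractional covers.
-/

open scoped Classical

/-- `a` sees `b` on the terrain `f`. -/
def Sees (f : ℝ → ℝ) (a b : ℝ) : Prop :=
  ∀ t ∈ Set.Icc (0:ℝ) 1, f ((1 - t) * a + t * b) ≤ (1 - t) * f a + t * f b

/-- A guard `g` sees a point `p` from the left. -/
def SeesLeft (f : ℝ → ℝ) (g p : ℝ) : Prop := g < p ∧ Sees f g p

/-- A guard `g` sees a point `p` from the right. -/
def SeesRight (f : ℝ → ℝ) (g p : ℝ) : Prop := p < g ∧ Sees f g p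

section Visibility

variable {f : ℝ → ℝ} {a b c d p q : ℝ}

theorem Sees.symm (h : Sees f a b) : Sees f b a := by
  intro t ht
  have hrev := h (1 - t) ⟨sub_nonneg.2 ht.2, sub_le_self 1 ht.1⟩
  rwa [sub_sub_cancel, add_comm (t * a), add_comm (t * f a)] at hrev

theorem Sees.mul_le (h : Sees f a b) (hab : a < b) {z : ℝ} (hz : z ∈ Set.Icc a b) :
    (b - a) * f z ≤ (b - z) * f a + (z - a) * f b := by
  have hpos : 0 < b - a := sub_pos.2 hab
  have hchord := h ((z - a) / (b - a))
    ⟨div_nonneg (sub_nonneg.2 hz.1) hpos.le, (div_le_one hpos).2 (sub_le_sub_right hz.2 a)⟩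
  have hpoint : (1 - (z - a) / (b - a)) * a + (z - a) / (b - a) * b = z := by
    field_simp
    ring
  rw [hpoint] at hchord
  refine (mul_le_mul_of_nonneg_left hchord hpos.le).trans_eq ?_
  field_simp
  ring

theorem sees_sub_affine_iff (m k : ℝ) :
    Sees (fun z => f z - (m * z + k)) a b ↔ Sees f a b := by
  refine forall₂_congr fun t _ => ?_
  rw [← sub_nonneg, ← sub_nonneg (b := f _)]
  ring_nf

theorem sees_of_forall_nonpos (hab : a ≤ b) (ha : f a = 0) (hb : f b = 0)
    (hf : ∀ z ∈ Set.Icc a b, f z ≤ 0) : Sees f a b := by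
  intro t ht
  rw [ha, hb, mul_zero, mul_zero, add_zero]
  exact hf _ (convex_Icc a b (Set.left_mem_Icc.2 hab) (Set.right_mem_Icc.2 hab)
    (sub_nonneg.2 ht.2) ht.1 (sub_add_cancel 1 t))

theorem nonpos_of_sees_of_sees (hab : a < b) (hbc : b < c) (hcd : c < d)
    (ha : f a = 0) (hd : f d = 0) (hac : Sees f a c) (hbd : Sees f b d) :
    ∀ z ∈ Set.Icc a d, f z ≤ 0 := by
  have below_ac : ∀ z ∈ Set.Icc a c, (c - a) * f z ≤ (z - a) * f c := fun z hz => by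
    simpa only [ha, mul_zero, zero_add] using hac.mul_le (hab.trans hbc) hz
  have below_bd : ∀ z ∈ Set.Icc b d, (d - b) * f z ≤ (d - z) * f b := fun z hz => by
    simpa only [hd, mul_zero, add_zero] using hbd.mul_le (hbc.trans hcd) hz
  have hca : 0 < c - a := by linarith
  have hdb : 0 < d - b := by linarith
  have hc : f c ≤ 0 := by
    have hchain : (d - b) * (c - a) * f c ≤ (d - c) * (b - a) * f c :=
      calc (d - b) * (c - a) * f c = (c - a) * ((d - b) * f c) := by ring
        _ ≤ (c - a) * ((d - c) * f b) :=
          mul_le_mul_of_nonneg_left (below_bd c ⟨hbc.le, hcd.le⟩) hca.le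
        _ = (d - c) * ((c - a) * f b) := by ring
        _ ≤ (d - c) * ((b - a) * f c) :=
          mul_le_mul_of_nonneg_left (below_ac b ⟨hab.le, hbc.le⟩) (sub_pos.2 hcd).le
        _ = (d - c) * (b - a) * f c := by ring
    have hcoeff : (d - c) * (b - a) < (d - b) * (c - a) :=
      mul_lt_mul'' (by linarith) (by linarith) (by linarith) (by linarith)
    by_contra! hpos
    exact hchain.not_gt (mul_lt_mul_of_pos_right hcoeff hpos)
  have nonpos_ac : ∀ z ∈ Set.Icc a c, f z ≤ 0 := fun z hz =>
    nonpos_of_mul_nonpos_right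
      ((below_ac z hz).trans (mul_nonpos_of_nonneg_of_nonpos (sub_nonneg.2 hz.1) hc)) hca
  rintro z ⟨haz, hzd⟩
  rcases le_total z c with hzc | hcz
  · exact nonpos_ac z ⟨haz, hzc⟩
  · have hb : f b ≤ 0 := nonpos_ac b ⟨hab.le, hbc.le⟩
    exact nonpos_of_mul_nonpos_right ((below_bd z ⟨hbc.le.trans hcz, hzd⟩).trans
      (mul_nonpos_of_nonneg_of_nonpos (sub_nonneg.2 hzd) hb)) hdb

theorem Sees.of_crossing (hab : a < b) (hbc : b < c) (hcd : c < d)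
    (hac : Sees f a c) (hbd : Sees f b d) : Sees f a d := by
  have had : a < d := hab.trans (hbc.trans hcd)
  -- Subtracting the chord from `a` to `d` reduces to the case `f a = f d = 0`.
  obtain ⟨m, k, ha, hd⟩ : ∃ m k : ℝ, f a - (m * a + k) = 0 ∧ f d - (m * d + k) = 0 := by
    have hne : d - a ≠ 0 := (sub_pos.2 had).ne'
    refine ⟨(f d - f a) / (d - a), f a - (f d - f a) / (d - a) * a, by ring, ?_⟩
    field_simp
    ring
  rw [← sees_sub_affine_iff m k] at hac hbd ⊢
  exact sees_of_forall_nonpos had.le ha hd (nonpos_of_sees_of_sees hab hbc hcd ha hd hac hbd)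

theorem SeesLeft.of_le (hab : a ≤ b) (hbp : b < p) (hpq : p ≤ q)
    (hap : SeesLeft f a p) (hbq : SeesLeft f b q) : SeesLeft f a q := by
  rcases hab.eq_or_lt with rfl | hab
  · exact hbq
  rcases hpq.eq_or_lt with rfl | hpq
  · exact hap
  exact ⟨hab.trans hbq.1, hap.2.of_crossing hab hbp hpq hbq.2⟩

theorem SeesRight.of_le (hqp : q ≤ p) (hpb : p < b) (hba : b ≤ a)
    (hap : SeesRight f a p) (hbq : SeesRight f b q) : SeesRight f a q := by
  rcases hba.eq_or_lt with rfl | hba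
  · exact hbq
  rcases hqp.eq_or_lt with rfl | hqp
  · exact hap
  exact ⟨hbq.1.trans hba, (hbq.2.symm.of_crossing hqp hpb hba hap.2.symm).symm⟩

end Visibility

section NestedViews

variable {α β κ : Type*} [LE κ] {π : α → κ} {R : β → α → Prop}

/-- The points that the guard `g` sees among those at or beyond the position of `p`. The position
map `π` determines the direction of travel: `id` for left to right, `OrderDual.toDual` for right to
left. -/
def viewFrom (π : α → κ) (R : β → α → Prop) (p : α) (g : β) : Set α :=
  {q | π p ≤ π q ∧ R g q}

/-- For every point `p`, the guards seeing `p` have pairwise comparable views from `p` on. This is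
the structure that makes one-sided covering have integrality gap `1`. -/
def HasNestedViews (π : α → κ) (R : β → α → Prop) : Prop :=
  ∀ ⦃p g g'⦄, R g p → R g' p →
    viewFrom π R p g ⊆ viewFrom π R p g' ∨ viewFrom π R p g' ⊆ viewFrom π R p g

theorem hasNestedViews_seesLeft (f : ℝ → ℝ) : HasNestedViews id (SeesLeft f) := by
  intro p g g' hg hg'
  rcases le_total g g' with h | h
  · exact Or.inr fun q hq => ⟨hq.1, hg.of_le h hg'.1 hq.1 hq.2⟩
  · exact Or.inl fun q hq => ⟨hq.1, hg'.of_le h hg.1 hq.1 hq.2⟩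

theorem hasNestedViews_seesRight (f : ℝ → ℝ) :
    HasNestedViews OrderDual.toDual (SeesRight f) := by
  intro p g g' hg hg'
  rcases le_total g g' with h | h
  · exact Or.inl fun q hq => ⟨hq.1, hg'.of_le (OrderDual.toDual_le_toDual.1 hq.1) hg.1 h hq.2⟩
  · exact Or.inr fun q hq => ⟨hq.1, hg.of_le (OrderDual.toDual_le_toDual.1 hq.1) hg'.1 h hq.2⟩

theorem HasNestedViews.exists_largest_view (hR : HasNestedViews π R) {B : Finset β} {p : α}
    (hB : ∃ g ∈ B, R g p) :
    ∃ m ∈ B, R m p ∧ ∀ g ∈ B, R g p → viewFrom π R p g ⊆ viewFrom π R p m := by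
  have hne : {g ∈ B | R g p}.Nonempty := by simpa only [Finset.filter_nonempty_iff] using hB
  obtain ⟨m, hm, hmax⟩ := Finset.exists_maximalFor (viewFrom π R p) _ hne
  obtain ⟨hmB, hmp⟩ := Finset.mem_filter.1 hm
  refine ⟨m, hmB, hmp, fun g hg hgp => ?_⟩
  exact (hR hgp hmp).elim id (hmax (Finset.mem_filter.2 ⟨hg, hgp⟩))

theorem HasNestedViews.exists_subset_card_eq_one (hR : HasNestedViews π R) {B : Finset β} {p : α}
    (hB : ∃ g ∈ B, R g p) :
    ∃ C ⊆ B, {g ∈ C | R g p}.card = 1 ∧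
      ∀ q, π p ≤ π q → (∃ g ∈ B, R g q) → ∃ g ∈ C, R g q := by
  obtain ⟨m, hmB, hmp, hlargest⟩ := hR.exists_largest_view hB
  have hmC : m ∈ {g ∈ B | R g p → g = m} := Finset.mem_filter.2 ⟨hmB, fun _ => rfl⟩
  refine ⟨{g ∈ B | R g p → g = m}, Finset.filter_subset _ _, ?_, ?_⟩
  · refine Finset.card_eq_one.2 ⟨m, Finset.ext fun g => ?_⟩
    rw [Finset.mem_filter, Finset.mem_singleton]
    constructor
    · rintro ⟨hg, hgp⟩
      exact (Finset.mem_filter.1 hg).2 hgp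
    · rintro rfl
      exact ⟨hmC, hmp⟩
  · rintro q hpq ⟨g, hg, hgq⟩
    by_cases hgp : R g p
    · exact ⟨m, hmC, (hlargest g hg hgp ⟨hpq, hgq⟩).2⟩
    · exact ⟨g, Finset.mem_filter.2 ⟨hg, fun h => absurd h hgp⟩, hgq⟩

end NestedViews

section LocalRatio

variable {β 𝕜 : Type*} [CommRing 𝕜]

/-- The weights `w` lowered by `ε` on the guards satisfying `P`, as in a local-ratio step. -/
noncomputable def reducedWeight (w : β → 𝕜) (P : β → Prop) (ε : 𝕜) (g : β) : 𝕜 :=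
  w g - if P g then ε else 0

theorem sum_reducedWeight_mul (G : Finset β) (w x : β → 𝕜) (P : β → Prop) (ε : 𝕜) :
    ∑ g ∈ G, reducedWeight w P ε g * x g = ∑ g ∈ G, w g * x g - ε * ∑ g ∈ G with P g, x g := by
  simp only [reducedWeight, sub_mul, ite_mul, zero_mul, Finset.sum_sub_distrib, Finset.sum_filter,
    Finset.mul_sum, mul_ite, mul_zero]

theorem sum_le_sum_mul_of_reducedWeight [LinearOrder 𝕜] [IsStrictOrderedRing 𝕜]
    {C G : Finset β} {w x : β → 𝕜} {P : β → Prop} {ε : 𝕜}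
    (hε : 0 ≤ ε) (hC : {g ∈ C | P g}.card = 1) (hG : 1 ≤ ∑ g ∈ G with P g, x g)
    (hle : ∑ g ∈ C, reducedWeight w P ε g ≤ ∑ g ∈ G, reducedWeight w P ε g * x g) :
    ∑ g ∈ C, w g ≤ ∑ g ∈ G, w g * x g := by
  have hweight : ∑ g ∈ C, reducedWeight w P ε g = ∑ g ∈ C, w g - ε := by
    simpa [hC] using sum_reducedWeight_mul C w 1 P ε
  rw [hweight, sum_reducedWeight_mul] at hle
  linarith [le_mul_of_one_le_right hε hG]

end LocalRatio

section Covering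

variable {α β γ : Type*} {R : β → α → Prop} {S : γ → α → Prop}

theorem HasNestedViews.exists_cover_insert {κ M : Type*} [Preorder κ] [AddCommMonoid M]
    [PartialOrder M] [IsOrderedAddMonoid M] {π : α → κ} (hR : HasNestedViews π R) {G A : Finset β}
    {N : Finset α} {p : α} {w : β → M} {g₀ : β} (hp : ∀ q ∈ N, π p ≤ π q) (hAG : A ⊆ G)
    (hg₀ : g₀ ∈ G) (hg₀p : R g₀ p) (hw : ∀ g ∈ G, 0 ≤ w g) (hwg₀ : w g₀ = 0)
    (hA : ∀ q ∈ N, ∃ g ∈ A, R g q) :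
    ∃ C ⊆ G, {g ∈ C | R g p}.card = 1 ∧ (∀ q ∈ insert p N, ∃ g ∈ C, R g q) ∧
      ∑ g ∈ C, w g ≤ ∑ g ∈ A, w g := by
  have hBG : insert g₀ A ⊆ G := Finset.insert_subset hg₀ hAG
  have hg₀B : g₀ ∈ insert g₀ A := Finset.mem_insert_self _ _
  obtain ⟨C, hCB, hcard, hC⟩ := hR.exists_subset_card_eq_one ⟨g₀, hg₀B, hg₀p⟩
  refine ⟨C, hCB.trans hBG, hcard, ?_, ?_⟩
  · rw [Finset.forall_mem_insert]
    refine ⟨hC p le_rfl ⟨g₀, hg₀B, hg₀p⟩, fun q hq => hC q (hp q hq) ?_⟩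
    obtain ⟨g, hg, hgq⟩ := hA q hq
    exact ⟨g, Finset.mem_insert_of_mem hg, hgq⟩
  · calc ∑ g ∈ C, w g ≤ ∑ g ∈ insert g₀ A, w g :=
          Finset.sum_le_sum_of_subset_of_nonneg hCB fun g hg _ => hw g (hBG hg)
      _ = ∑ g ∈ A, w g := Finset.sum_insert_of_eq_zero_if_notMem fun _ => hwg₀

variable {κ κ' 𝕜 : Type*} [LinearOrder κ] [LinearOrder κ'] {π : α → κ} {σ : α → κ'}
  [CommRing 𝕜] [LinearOrder 𝕜] [IsStrictOrderedRing 𝕜]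

theorem HasNestedViews.exists_cover_sum_le (hR : HasNestedViews π R) {G : Finset β} {N : Finset α}
    {w x : β → 𝕜} (hw : ∀ g ∈ G, 0 ≤ w g) (hx : ∀ g ∈ G, 0 ≤ x g)
    (hcov : ∀ p ∈ N, 1 ≤ ∑ g ∈ G with R g p, x g) :
    ∃ A ⊆ G, (∀ p ∈ N, ∃ g ∈ A, R g p) ∧ ∑ g ∈ A, w g ≤ ∑ g ∈ G, w g * x g := by
  induction N using Finset.induction_on_min_value π generalizing w with
  | empty =>
    refine ⟨∅, Finset.empty_subset G, by simp, ?_⟩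
    simpa using Finset.sum_nonneg fun g hg => mul_nonneg (hw g hg) (hx g hg)
  | insert p N _ hmin ih =>
    rw [Finset.forall_mem_insert] at hcov
    obtain ⟨hcov_p, hcov_N⟩ := hcov
    have hseen : {g ∈ G | R g p}.Nonempty :=
      Finset.nonempty_of_sum_ne_zero (zero_lt_one.trans_le hcov_p).ne'
    obtain ⟨g₀, hg₀, hg₀_min⟩ := Finset.exists_min_image _ w hseen
    obtain ⟨hg₀G, hg₀p⟩ := Finset.mem_filter.1 hg₀
    have hreduced : ∀ g ∈ G, 0 ≤ reducedWeight w (R · p) (w g₀) g := fun g hg => by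
      unfold reducedWeight
      split_ifs with hgp
      · exact sub_nonneg.2 (hg₀_min g (Finset.mem_filter.2 ⟨hg, hgp⟩))
      · simpa only [sub_zero] using hw g hg
    have hreduced_g₀ : reducedWeight w (R · p) (w g₀) g₀ = 0 := by
      rw [reducedWeight, if_pos hg₀p, sub_self]
    obtain ⟨A, hAG, hA, hAw⟩ := ih hreduced hcov_N
    obtain ⟨C, hCG, hcard, hC, hCA⟩ :=
      hR.exists_cover_insert hmin hAG hg₀G hg₀p hreduced hreduced_g₀ hA
    exact ⟨C, hCG, hC,
      sum_le_sum_mul_of_reducedWeight (hw g₀ hg₀G) hcard hcov_p (hCA.trans hAw)⟩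

theorem HasNestedViews.exists_cover_sum_le_two_mul (hR : HasNestedViews π R) {G : Finset β}
    {w x : β → 𝕜} (hw : ∀ g ∈ G, 0 ≤ w g) (hx : ∀ g ∈ G, 0 ≤ x g) (N : Finset α) :
    ∃ A ⊆ G, (∀ p ∈ N, 1 ≤ 2 * ∑ g ∈ G with R g p, x g → ∃ g ∈ A, R g p) ∧
      ∑ g ∈ A, w g ≤ 2 * ∑ g ∈ G, w g * x g := by
  obtain ⟨A, hAG, hA, hAw⟩ := hR.exists_cover_sum_le (G := G) (x := fun g => 2 * x g)
    (N := {p ∈ N | 1 ≤ 2 * ∑ g ∈ G with R g p, x g}) hw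
    (fun g hg => mul_nonneg zero_le_two (hx g hg))
    (fun p hp => by simpa only [Finset.mul_sum] using (Finset.mem_filter.1 hp).2)
  refine ⟨A, hAG, fun p hp hhalf => hA p (Finset.mem_filter.2 ⟨hp, hhalf⟩), ?_⟩
  simpa only [mul_left_comm _ (2 : 𝕜), ← Finset.mul_sum] using hAw

theorem one_sided_guarding_two_approx_general (hR : HasNestedViews π R) (hS : HasNestedViews σ S)
    {G : Finset β} {H : Finset γ} {N : Finset α} {u x : β → 𝕜} {v y : γ → 𝕜}
    (hu : ∀ g ∈ G, 0 ≤ u g) (hv : ∀ h ∈ H, 0 ≤ v h)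
    (hx : ∀ g ∈ G, 0 ≤ x g) (hy : ∀ h ∈ H, 0 ≤ y h)
    (hcov : ∀ p ∈ N, 1 ≤ (∑ g ∈ G with R g p, x g) + ∑ h ∈ H with S h p, y h) :
    ∃ A ⊆ G, ∃ B ⊆ H, (∀ p ∈ N, (∃ g ∈ A, R g p) ∨ (∃ h ∈ B, S h p)) ∧
      (∑ g ∈ A, u g) + ∑ h ∈ B, v h ≤ 2 * ((∑ g ∈ G, u g * x g) + ∑ h ∈ H, v h * y h) := by
  obtain ⟨A, hAG, hA, hAu⟩ := hR.exists_cover_sum_le_two_mul hu hx N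
  obtain ⟨B, hBH, hB, hBv⟩ := hS.exists_cover_sum_le_two_mul hv hy N
  refine ⟨A, hAG, B, hBH, fun p hp => ?_, by linarith⟩
  have hhalf : 1 ≤ 2 * ∑ g ∈ G with R g p, x g ∨ 1 ≤ 2 * ∑ h ∈ H with S h p, y h := by
    by_contra! hlt
    linarith [hcov p hp]
  exact hhalf.imp (hA p hp) (hB p hp)

end Covering

/-- LP-rounding gives a factor-2 guarantee for one-sided guarding. -/
theorem one_sided_guarding_two_approx (f : ℝ → ℝ) (G_L G_R N : Finset ℝ)
    (w_L w_R x y : ℝ → ℝ)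
    (hwL : ∀ g ∈ G_L, 0 ≤ w_L g) (hwR : ∀ g ∈ G_R, 0 ≤ w_R g)
    (hx : ∀ g ∈ G_L, 0 ≤ x g) (hy : ∀ g ∈ G_R, 0 ≤ y g)
    (hcov : ∀ p ∈ N,
      1 ≤ (∑ g ∈ G_L, if SeesLeft f g p then x g else 0) +
          (∑ g ∈ G_R, if SeesRight f g p then y g else 0)) :
    ∃ A_L ⊆ G_L, ∃ A_R ⊆ G_R,
      (∀ p ∈ N, (∃ g ∈ A_L, SeesLeft f g p) ∨ (∃ g ∈ A_R, SeesRight f g p)) ∧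
      (∑ g ∈ A_L, w_L g) + (∑ g ∈ A_R, w_R g) ≤
        2 * ((∑ g ∈ G_L, w_L g * x g) + (∑ g ∈ G_R, w_R g * y g)) := by
  simp only [← Finset.sum_filter] at hcov
  exact one_sided_guarding_two_approx_general (hasNestedViews_seesLeft f)
    (hasNestedViews_seesRight f) hwL hwR hx hy hcov
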